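/- Let G be the free group on generators a_1,…,a_n, let φ : G → G be an endomorphism, and let u, v ∈ G. If the (n+2)-tuple t = (φ(a_1),…,φ(a_n), u, v) has remnant, then u and v are not singly-twisted conjugate with respect to φ; that is, there is no z ∈ G with u = φ(z)·v·z⁻¹. -/

import Mathlib

/-- Half the total cancellation in the product `x * y` of elements of a free group:
`(|x| + |y| - |x*y|) / 2`. -/
def cancelLen {β : Type} [DecidableEq β] (x y : FreeGroup β) : ℕ :=
  (FreeGroup.norm x + FreeGroup.norm y - FreeGroup.norm (x * y)) / 2

/-- `x` or `x⁻¹`, according to the sign `b` (`true` = exponent `1`, `false` = exponent `-1`). -/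
def pmPow {β : Type} [DecidableEq β] (b : Bool) (x : FreeGroup β) : FreeGroup β :=
  if b then x else x⁻¹

/-- The left cancellation `L_i` of the `i`-th entry of the tuple `t`: the maximum of
`(|h_j^α| + |h_i| - |h_j^α * h_i|)/2` over pairs `(j, α)` with `(j, α) ≠ (i, -1)`. -/
def leftCancel {β : Type} [DecidableEq β] {N : ℕ} (t : Fin N → FreeGroup β) (i : Fin N) : ℕ :=
  Finset.univ.sup fun p : Fin N × Bool =>
    if p.1 = i ∧ p.2 = false then 0 else cancelLen (pmPow p.2 (t p.1)) (t i)

/-- The right cancellation `R_i` of the `i`-th entry of the tuple `t`: the maximum of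
`(|h_i| + |h_k^β| - |h_i * h_k^β|)/2` over pairs `(k, β)` with `(k, β) ≠ (i, -1)`. -/
def rightCancel {β : Type} [DecidableEq β] {N : ℕ} (t : Fin N → FreeGroup β) (i : Fin N) : ℕ :=
  Finset.univ.sup fun p : Fin N × Bool =>
    if p.1 = i ∧ p.2 = false then 0 else cancelLen (t i) (pmPow p.2 (t p.1))

/-- The remnant length `|Rem_t h_i| = |h_i| - L_i - R_i` of the `i`-th entry of `t`. -/
def remLen {β : Type} [DecidableEq β] {N : ℕ} (t : Fin N → FreeGroup β) (i : Fin N) : ℕ :=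
  FreeGroup.norm (t i) - leftCancel t i - rightCancel t i

/-- A tuple has remnant if `|h_i| - L_i - R_i ≥ 1` for all `i`. -/
def HasRemnant {β : Type} [DecidableEq β] {N : ℕ} (t : Fin N → FreeGroup β) : Prop :=
  ∀ i, 1 ≤ remLen t i

def lcpLen {α : Type} [DecidableEq α] : List α → List α → ℕ
  | [], _ => 0
  | _ :: _, [] => 0
  | a :: s, b :: t => if a = b then lcpLen s t + 1 else 0

theorem lcpLen_comm {α : Type} [DecidableEq α] : ∀ a b : List α, lcpLen a b = lcpLen b a
  | [], [] => rfl
  | [], _ :: _ => rfl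
  | _ :: _, [] => rfl
  | a :: s, b :: t => by
    have := lcpLen_comm s t
    simp only [lcpLen]
    grind

theorem lcpLen_ultra {α : Type} [DecidableEq α] :
    ∀ a b c : List α, min (lcpLen a b) (lcpLen b c) ≤ lcpLen a c
  | [], _, _ => by simp [lcpLen]
  | _ :: _, [], _ => by simp [lcpLen]
  | _ :: _, _ :: _, [] => by simp [lcpLen]
  | x :: a, y :: b, z :: c => by
    have := lcpLen_ultra a b c
    simp only [lcpLen]
    grind

theorem norm_lcp_aux {β : Type} [DecidableEq β] : ∀ s t : List (β × Bool),
    FreeGroup.IsReduced s → FreeGroup.IsReduced t →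
    FreeGroup.norm ((FreeGroup.mk s)⁻¹ * FreeGroup.mk t) + 2 * lcpLen s t = s.length + t.length
  | [], t, _, ht => by
    have : (FreeGroup.mk ([] : List (β × Bool))) = 1 := rfl
    simp [lcpLen, this, FreeGroup.norm, ht.reduce_eq]
  | x :: s, [], hs, _ => by
    have : (FreeGroup.mk ([] : List (β × Bool))) = 1 := rfl
    rw [this, mul_one, FreeGroup.norm_inv_eq]
    simp [lcpLen, FreeGroup.norm, hs.reduce_eq]
  | x :: s, y :: t, hs, ht => by
    by_cases hxy : x = y
    · subst hxy
      have ih := norm_lcp_aux s t (hs.infix ⟨[x], [], by simp⟩) (ht.infix ⟨[x], [], by simp⟩)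
      have e : (FreeGroup.mk (x :: s))⁻¹ * FreeGroup.mk (x :: t)
          = (FreeGroup.mk s)⁻¹ * FreeGroup.mk t := by
        have h1 : FreeGroup.mk (x :: s) = FreeGroup.mk [x] * FreeGroup.mk s := by
          rw [FreeGroup.mul_mk]; rfl
        have h2 : FreeGroup.mk (x :: t) = FreeGroup.mk [x] * FreeGroup.mk t := by
          rw [FreeGroup.mul_mk]; rfl
        rw [h1, h2]; group
      rw [e]
      simp only [lcpLen, if_true, List.length_cons]
      omega
    · have hr : FreeGroup.IsReduced (FreeGroup.invRev (x :: s) ++ y :: t) := by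
        have h1 : FreeGroup.IsReduced (FreeGroup.invRev (x :: s)) := by
          have h2 := FreeGroup.isReduced_toWord (x := (FreeGroup.mk (x :: s))⁻¹)
          rwa [FreeGroup.toWord_inv, FreeGroup.toWord_mk, hs.reduce_eq] at h2
        unfold FreeGroup.IsReduced at *
        rw [List.isChain_append]
        refine ⟨h1, ht, ?_⟩
        intro a ha b hb
        obtain ⟨x1, x2⟩ := x
        obtain ⟨y1, y2⟩ := y
        simp [FreeGroup.invRev] at ha hb
        subst ha hb
        simp at hxy ⊢
        intro h
        have := hxy h
        revert this
        cases x2 <;> cases y2 <;> simp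
      rw [FreeGroup.inv_mk, FreeGroup.mul_mk]
      simp only [lcpLen, if_neg hxy, FreeGroup.norm, FreeGroup.toWord_mk, hr.reduce_eq]
      simp

/-- Gromov product. -/
def gp {β : Type} [DecidableEq β] (x y : FreeGroup β) : ℕ := lcpLen x.toWord y.toWord

theorem norm_gp {β : Type} [DecidableEq β] (x y : FreeGroup β) :
    FreeGroup.norm (x⁻¹ * y) + 2 * gp x y = FreeGroup.norm x + FreeGroup.norm y := by
  have := norm_lcp_aux x.toWord y.toWord FreeGroup.isReduced_toWord FreeGroup.isReduced_toWord
  rwa [FreeGroup.mk_toWord, FreeGroup.mk_toWord] at this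

theorem gp_comm {β : Type} [DecidableEq β] (x y : FreeGroup β) : gp x y = gp y x :=
  lcpLen_comm _ _

theorem cancelLen_eq {β : Type} [DecidableEq β] (x y : FreeGroup β) :
    cancelLen x y = gp x⁻¹ y := by
  have := norm_gp x⁻¹ y
  rw [inv_inv, FreeGroup.norm_inv_eq] at this
  unfold cancelLen
  omega

theorem key {β ι : Type} [DecidableEq β] (h : ι × Bool → FreeGroup β) (L R : ι × Bool → ℕ)
    (hL : ∀ p q : ι × Bool, (p.1 = q.1 → p.2 = q.2) → gp (h p)⁻¹ (h q) ≤ L q)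
    (hR : ∀ p q : ι × Bool, (p.1 = q.1 → p.2 = q.2) → gp (h p)⁻¹ (h q) ≤ R p)
    (hrem : ∀ p, L p + R p + 1 ≤ FreeGroup.norm (h p)) :
    ∀ (w : List (ι × Bool)) (p : ι × Bool), FreeGroup.IsReduced (p :: w) →
      L p + (w.length + 1) ≤ FreeGroup.norm ((p :: w).map h).prod ∧
      FreeGroup.norm (h p) ≤ gp (h p) ((p :: w).map h).prod + R p
  | [], p, _ => by
    have h1 := norm_gp (h p) (h p)
    have h2 := hrem p
    simp only [inv_mul_cancel, FreeGroup.norm_one] at h1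
    simp
    omega
  | q :: w, p, hr => by
    unfold FreeGroup.IsReduced at hr
    rw [List.isChain_cons_cons] at hr
    obtain ⟨ih1, ih2⟩ := key h L R hL hR hrem w q hr.2
    rw [List.map_cons, List.prod_cons]
    generalize ((q :: w).map h).prod = Y at *
    have a1 := hL p q hr.1
    have a2 := hR p q hr.1
    have a3 := hrem p
    have a4 := hrem q
    have a5 : min (gp (h p)⁻¹ Y) (gp Y (h q)) ≤ gp (h p)⁻¹ (h q) := lcpLen_ultra _ _ _
    rw [gp_comm Y] at a5
    have a6 := norm_gp (h p) (h p * Y)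
    have a7 := norm_gp (h p)⁻¹ Y
    rw [inv_mul_cancel_left] at a6
    rw [inv_inv, FreeGroup.norm_inv_eq] at a7
    simp only [List.length_cons]
    omega

theorem left_le {β : Type} [DecidableEq β] {N : ℕ} (t : Fin N → FreeGroup β) (i : Fin N)
    (p : Fin N × Bool) (hp : ¬ (p.1 = i ∧ p.2 = false)) :
    gp (pmPow p.2 (t p.1))⁻¹ (t i) ≤ leftCancel t i := by
  have := Finset.le_sup (f := fun p : Fin N × Bool =>
    if p.1 = i ∧ p.2 = false then 0 else cancelLen (pmPow p.2 (t p.1)) (t i)) (Finset.mem_univ p)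
  simp only [if_neg hp, cancelLen_eq] at this
  unfold leftCancel
  simpa only [cancelLen_eq] using this

theorem right_le {β : Type} [DecidableEq β] {N : ℕ} (t : Fin N → FreeGroup β) (i : Fin N)
    (p : Fin N × Bool) (hp : ¬ (p.1 = i ∧ p.2 = false)) :
    gp (t i)⁻¹ (pmPow p.2 (t p.1)) ≤ rightCancel t i := by
  have := Finset.le_sup (f := fun p : Fin N × Bool =>
    if p.1 = i ∧ p.2 = false then 0 else cancelLen (t i) (pmPow p.2 (t p.1))) (Finset.mem_univ p)
  simp only [if_neg hp, cancelLen_eq] at this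
  unfold rightCancel
  simpa only [cancelLen_eq] using this

theorem pm_inv {β : Type} [DecidableEq β] (b : Bool) (x : FreeGroup β) :
    (pmPow b x)⁻¹ = pmPow (!b) x := by
  cases b <;> simp [pmPow]

theorem remnant_len {β : Type} [DecidableEq β] {N : ℕ} (t : Fin N → FreeGroup β)
    (ht : HasRemnant t) (w : List (Fin N × Bool)) (p : Fin N × Bool)
    (hw : FreeGroup.IsReduced (p :: w)) :
    w.length + 1 ≤ FreeGroup.norm ((p :: w).map (fun p => pmPow p.2 (t p.1))).prod := by
  have := (key (fun p : Fin N × Bool => pmPow p.2 (t p.1))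
    (fun p => if p.2 then leftCancel t p.1 else rightCancel t p.1)
    (fun p => if p.2 then rightCancel t p.1 else leftCancel t p.1) ?_ ?_ ?_ w p hw).1
  · omega
  · rintro ⟨p, a⟩ ⟨q, b⟩ hpq
    cases b
    · have := right_le t q (p, !a) (by simpa using hpq)
      rw [gp_comm, pm_inv]
      simpa [pmPow] using this
    · have := left_le t q (p, a) (by simpa using hpq)
      simpa [pmPow] using this
  · rintro ⟨p, a⟩ ⟨q, b⟩ hpq
    cases a
    · have := left_le t p (q, !b) (by
      rintro ⟨h, h'⟩
      have := hpq h.symm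
      simp_all)
      rw [gp_comm]
      simp only [pm_inv, Bool.not_not] at this ⊢
      simpa [pmPow] using this
    · have := right_le t p (q, b) (by
      rintro ⟨h, h'⟩
      have := hpq h.symm
      simp_all)
      simpa [pmPow] using this
  · rintro ⟨p, a⟩
    have := ht p
    unfold remLen at this
    cases a <;> simp [pmPow] <;> omega

/-- Let `G` be the free group on `n` generators, `φ : G → G` an
endomorphism and `u v ∈ G`. If the `(n+2)`-tuple `t = (φ(a_1), …, φ(a_n), u, v)` has
remnant, then there is no `z ∈ G` with `u = φ(z) * v * z⁻¹`. -/
theorem no_singly_twisted_conjugacy_of_remnant {n : ℕ}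
    (φ : FreeGroup (Fin n) →* FreeGroup (Fin n)) (u v : FreeGroup (Fin n))
    (t : Fin (n + 2) → FreeGroup (Fin n))
    (ht : t = Fin.snoc (Fin.snoc (fun i : Fin n => φ (FreeGroup.of i)) u) v)
    (hrem : HasRemnant t) :
    ¬ ∃ z : FreeGroup (Fin n), u = φ z * v * z⁻¹ := by
  rintro ⟨z, hz⟩
  have hv : t (Fin.last (n + 1)) = v := by rw [ht]; simp
  have hu : t (Fin.last n).castSucc = u := by rw [ht]; simp
  have hi : ∀ i : Fin n, t i.castSucc.castSucc = φ (FreeGroup.of i) := by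
    intro i; rw [ht]; simp
  have hφ : φ z = (z.toWord.map (fun p => pmPow p.2 (φ (FreeGroup.of p.1)))).prod := by
    have h1 : φ = FreeGroup.lift (fun i => φ (FreeGroup.of i)) := by
      ext i; simp
    conv_lhs => rw [← FreeGroup.mk_toWord (x := z), h1, FreeGroup.lift_mk]
    congr 1
    apply List.map_congr_left
    rintro ⟨i, b⟩ -
    cases b <;> simp [pmPow]
  have hred : FreeGroup.IsReduced (((Fin.last n).castSucc, false) ::
      (z.toWord.map (fun p => (p.1.castSucc.castSucc, p.2)) ++ [(Fin.last (n + 1), true)])) := by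
    have hz := FreeGroup.isReduced_toWord (x := z)
    unfold FreeGroup.IsReduced at *
    rw [List.isChain_cons, List.isChain_append, List.isChain_map]
    refine ⟨?_, ?_, by simp, ?_⟩
    · intro y hy
      have : y ∈ z.toWord.map (fun p => (p.1.castSucc.castSucc, p.2)) ++
        [(Fin.last (n + 1), true)] := List.mem_of_mem_head? hy
      simp only [List.mem_append, List.mem_map, List.mem_singleton] at this
      rcases this with ⟨⟨a, b⟩, _, rfl⟩ | rfl
      · intro h
        simp [Fin.ext_iff] at h
        omega
      · intro h
        simp [Fin.ext_iff] at h
    · exact hz.imp (fun a b h h' => h (by simpa using h'))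
    · intro x hx y hy
      have := List.mem_of_mem_getLast? hx
      simp only [List.mem_map] at this
      obtain ⟨⟨a, b⟩, _, rfl⟩ := this
      simp at hy
      subst hy
      intro h
      simp [Fin.ext_iff] at h
      omega
  have := remnant_len t hrem _ _ hred
  have e : z = u⁻¹ * (φ z * v) := by rw [hz]; group
  have e2 : (List.map (fun p : Fin (n + 2) × Bool => pmPow p.2 (t p.1))
      (((Fin.last n).castSucc, false) ::
      (z.toWord.map (fun p => (p.1.castSucc.castSucc, p.2)) ++ [(Fin.last (n + 1), true)]))).prod
      = z := by
    conv_rhs => rw [e, hφ]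
    simp [pmPow, hu, hv, hi, Function.comp_def]
  rw [e2] at this
  simp [FreeGroup.norm] at this
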